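/- Fix a real h with 1/2 < h ≤ 1, so that δ := h² − 1/4 > 0. Then there exist constants α > 0 and C > 0 (depending only on h) such that for all positive integers n_A, n_B, n_C with n_A, n_B ≥ 1, setting d_A = 2^{n_A}, d_B = 2^{n_B}, d_C = 2^{n_C}, d = d_A·d_B·d_C, and letting ψ = U e₁ be a Haar random state on ℂ^{d_A}⊗ℂ^{d_B}⊗ℂ^{d_C} with reduced density matrix ρ_AB, the Haar probability that at least one EPR pair is LU-distillable — i.e., that there exist unitaries U_A ∈ U(d_A), U_B ∈ U(d_B) with Tr[(U_A⊗U_B) ρ_AB (U_A⊗U_B)† Π₁] ≥ h², where Π₁ is the EPR projector on the first qubit of A and the first qubit of B tensored with the identity — satisfies: log Prob ≤ −α·d + C·(d_A² + d_B²). -/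

import Mathlib

/-!
Theorem 1 (informal) of the paper: for a tripartite Haar random state, the
probability that at least one EPR pair is LU-distillable (at fidelity tolerance
`1/2 < h ≤ 1`) between `A` and `B` is exponentially suppressed in
`d = d_A d_B d_C`: `log Prob ≤ -α d + C (d_A² + d_B²)`.
-/

open MeasureTheory Matrix
open scoped Kronecker Classical

noncomputable section

/-- `ℂ²` tensor factors: a basis index for `(ℂ²)^{⊗ n}`. -/
abbrev QubitIdx (n : ℕ) := Fin n → Fin 2

instance matrixMeasurableSpace (I : Type*) : MeasurableSpace (Matrix I I ℂ) :=
  borel _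

instance matrixBorelSpace (I : Type*) : BorelSpace (Matrix I I ℂ) := ⟨rfl⟩

/-- The Haar random state `ψ = U e₁`: the column of the unitary `U` at the fixed
standard basis index `default`. -/
def haarState {I : Type*} [DecidableEq I] [Fintype I] [Inhabited I]
    (U : Matrix.unitaryGroup I ℂ) : I → ℂ :=
  fun i => U.1 i default

/-- Reduced density matrix on the first two tensor factors of a tripartite vector:
`ρ_AB[(a,b),(a',b')] = ∑_c ψ(a,b,c) conj (ψ(a',b',c))`. -/
def rhoAB {IA IB IC : Type*} [Fintype IC] (ψ : IA × IB × IC → ℂ) :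
    Matrix (IA × IB) (IA × IB) ℂ :=
  Matrix.of fun p q => ∑ x : IC, ψ (p.1, p.2, x) * (starRingEnd ℂ) (ψ (q.1, q.2, x))

/-- The projector `Π₁` onto one EPR pair between the first qubit of `A` and the
first qubit of `B`, tensored with the identity on all remaining qubits. -/
def eprProjOne (nA nB : ℕ) (hA : 0 < nA) (hB : 0 < nB) :
    Matrix (QubitIdx nA × QubitIdx nB) (QubitIdx nA × QubitIdx nB) ℂ :=
  Matrix.of fun p q =>
    if p.1 ⟨0, hA⟩ = p.2 ⟨0, hB⟩ ∧ q.1 ⟨0, hA⟩ = q.2 ⟨0, hB⟩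
        ∧ (∀ k : Fin nA, 1 ≤ (k : ℕ) → p.1 k = q.1 k)
        ∧ (∀ k : Fin nB, 1 ≤ (k : ℕ) → p.2 k = q.2 k)
    then (2 : ℂ)⁻¹ else 0

theorem sep_card_le {E : Type*} [NormedAddCommGroup E] [NormedSpace ℝ E] [FiniteDimensional ℝ E]
    {ε : ℝ} (hε : 0 < ε) (s : Finset E) (hs : ∀ c ∈ s, ‖c‖ ≤ 1)
    (h : ∀ c ∈ s, ∀ d ∈ s, c ≠ d → ε ≤ ‖c - d‖) :
    (s.card : ℝ) ≤ ((1 + ε / 2) / (ε / 2)) ^ Module.finrank ℝ E := by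
  borelize E
  let μ : Measure E := Measure.addHaar
  have hδ : 0 < ε / 2 := by positivity
  have hρ : 0 < 1 + ε / 2 := by positivity
  generalize hδe : ε / 2 = δ at *
  generalize hρe : 1 + δ = ρ at *
  set A := ⋃ c ∈ s, Metric.ball (c : E) δ with hA
  have D : Set.Pairwise (s : Set E) (Function.onFun Disjoint fun c => Metric.ball (c : E) δ) := by
    rintro c hc d hd hcd
    apply Metric.ball_disjoint_ball
    rw [dist_eq_norm]
    have := h c hc d hd hcd
    linarith
  have A_subset : A ⊆ Metric.ball (0 : E) ρ := by
    refine Set.iUnion₂_subset fun x hx => ?_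
    apply Metric.ball_subset_ball'
    rw [dist_zero_right]
    have := hs x hx
    linarith
  have I :
    (s.card : ENNReal) * ENNReal.ofReal (δ ^ Module.finrank ℝ E) * μ (Metric.ball 0 1) ≤
      ENNReal.ofReal (ρ ^ Module.finrank ℝ E) * μ (Metric.ball 0 1) :=
    calc
      (s.card : ENNReal) * ENNReal.ofReal (δ ^ Module.finrank ℝ E) * μ (Metric.ball 0 1) = μ A := by
        rw [hA, measure_biUnion_finset D fun c _ => measurableSet_ball]
        simp only [μ.addHaar_ball_of_pos _ hδ]
        simp only [Finset.sum_const, nsmul_eq_mul, mul_assoc]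
      _ ≤ μ (Metric.ball (0 : E) ρ) := measure_mono A_subset
      _ = ENNReal.ofReal (ρ ^ Module.finrank ℝ E) * μ (Metric.ball 0 1) := by
        simp only [μ.addHaar_ball_of_pos _ hρ]
  have J : (s.card : ENNReal) * ENNReal.ofReal (δ ^ Module.finrank ℝ E)
      ≤ ENNReal.ofReal (ρ ^ Module.finrank ℝ E) :=
    (ENNReal.mul_le_mul_iff_left (Metric.measure_ball_pos _ _ zero_lt_one).ne'
      measure_ball_lt_top.ne).1 I
  have K := ENNReal.toReal_le_of_le_ofReal (pow_nonneg hρ.le _) J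
  rw [ENNReal.toReal_mul, ENNReal.toReal_natCast,
    ENNReal.toReal_ofReal (pow_nonneg hδ.le _)] at K
  rw [div_pow, le_div_iff₀ (pow_pos hδ _)]
  exact K

section L2
open scoped Matrix.Norms.L2Operator

theorem unitary_norm_le {I : Type} [Fintype I] [DecidableEq I] (U : Matrix.unitaryGroup I ℂ) :
    ‖U.1‖ ≤ 1 := by
  rcases subsingleton_or_nontrivial (Matrix I I ℂ) with h | h
  · rw [Subsingleton.elim U.1 0]; simp
  · exact (CStarRing.norm_of_mem_unitary U.2).le

theorem unitary_net {ε : ℝ} (hε : 0 < ε) : ∃ C : ℝ, 0 < C ∧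
    ∀ (I : Type) [Fintype I] [DecidableEq I], ∃ N : Finset (Matrix.unitaryGroup I ℂ),
      (N.card : ℝ) ≤ Real.exp (C * (Fintype.card I : ℝ) ^ 2) ∧
      ∀ U : Matrix.unitaryGroup I ℂ, ∃ V ∈ N, ‖U.1 - V.1‖ ≤ ε := by
  have hK : 1 < (1 + ε / 2) / (ε / 2) := by
    rw [one_lt_div (by positivity)]; linarith
  refine ⟨2 * Real.log ((1 + ε / 2) / (ε / 2)), by have := Real.log_pos hK; positivity, ?_⟩
  intro I _ _
  have hfr : Module.finrank ℝ (Matrix I I ℂ) = 2 * Fintype.card I ^ 2 := by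
    rw [← Module.finrank_mul_finrank ℝ ℂ (Matrix I I ℂ), Complex.finrank_real_complex,
      Module.finrank_matrix]
    simp [sq]
  have bound : ∀ N : Finset (Matrix.unitaryGroup I ℂ),
      (∀ c ∈ N, ∀ d ∈ N, c ≠ d → ε ≤ ‖c.1 - d.1‖) →
      (N.card : ℝ) ≤ ((1 + ε / 2) / (ε / 2)) ^ (2 * Fintype.card I ^ 2) := by
    intro N hN
    rw [← hfr, ← Finset.card_map ⟨Subtype.val, Subtype.val_injective⟩]
    apply sep_card_le hε
    · intro c hc
      simp only [Finset.mem_map, Function.Embedding.coeFn_mk] at hc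
      obtain ⟨u, _, rfl⟩ := hc
      exact unitary_norm_le u
    · intro c hc d hd hcd
      simp only [Finset.mem_map, Function.Embedding.coeFn_mk] at hc hd
      obtain ⟨u, hu, rfl⟩ := hc
      obtain ⟨v, hv, rfl⟩ := hd
      exact hN u hu v hv (fun h => hcd (by rw [h]))
  let S : Set ℕ := {n | ∃ N : Finset (Matrix.unitaryGroup I ℂ),
      (∀ c ∈ N, ∀ d ∈ N, c ≠ d → ε ≤ ‖c.1 - d.1‖) ∧ N.card = n}
  have hSne : S.Nonempty := ⟨0, ∅, by simp, rfl⟩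
  have hSb : BddAbove S := by
    refine ⟨⌊((1 + ε / 2) / (ε / 2)) ^ (2 * Fintype.card I ^ 2)⌋₊, ?_⟩
    rintro n ⟨N, hN, rfl⟩
    exact Nat.le_floor (bound N hN)
  obtain ⟨N, hN, hcard⟩ := Nat.sSup_mem hSne hSb
  refine ⟨N, (bound N hN).trans ?_, ?_⟩
  · rw [← Real.exp_log (zero_lt_one.trans hK), ← Real.exp_nat_mul, Real.log_exp]
    apply le_of_eq; congr 1; push_cast; ring
  · intro U
    by_contra! hcon
    have hU : U ∉ N := fun h => by
      have := hcon U h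
      simp at this; linarith
    have : (insert U N).card ∈ S := by
      refine ⟨insert U N, ?_, rfl⟩
      intro c hc d hd hcd
      rcases Finset.mem_insert.1 hc with rfl | hc2 <;>
        rcases Finset.mem_insert.1 hd with rfl | hd2
      · exact absurd rfl hcd
      · exact (hcon d hd2).le
      · rw [norm_sub_rev]; exact (hcon c hc2).le
      · exact hN c hc2 d hd2 hcd
    have := le_csSup hSb this
    rw [Finset.card_insert_of_notMem hU, hcard] at this
    omega
end L2
theorem gauss_one {a : ℝ} (ha : 0 < a) :
    ∫⁻ z : ℂ, ENNReal.ofReal (Real.exp (-a * ‖z‖ ^ 2)) = ENNReal.ofReal (Real.pi / a) := by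
  have h1 : ∫ z : ℂ, Real.exp (-a * ‖z‖ ^ 2) = Real.pi / a := by
    rw [GaussianFourier.integral_rexp_neg_mul_sq_norm ha]
    simp [Complex.finrank_real_complex]
  rw [← h1, ofReal_integral_eq_lintegral_ofReal]
  · by_contra hn
    rw [integral_undef hn] at h1
    have : 0 < Real.pi / a := by positivity
    linarith
  · exact Filter.Eventually.of_forall fun z => (Real.exp_pos _).le

theorem gauss_pi {I : Type} [Fintype I] (a : I → ℝ) (ha : ∀ i, 0 < a i) :
    ∫⁻ x : I → ℂ, ENNReal.ofReal (Real.exp (-∑ i, a i * ‖x i‖ ^ 2))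
      = ENNReal.ofReal (∏ i, (Real.pi / a i)) := by
  have h1 : ∀ x : I → ℂ, Real.exp (-∑ i, a i * ‖x i‖ ^ 2)
      = ∏ i, Real.exp (-a i * ‖x i‖ ^ 2) := by
    intro x
    rw [← Real.exp_sum, ← Finset.sum_neg_distrib]
    simp
  have hint : ∀ i, ∫ z : ℂ, Real.exp (-a i * ‖z‖ ^ 2) = Real.pi / a i := by
    intro i
    rw [GaussianFourier.integral_rexp_neg_mul_sq_norm (ha i)]
    simp [Complex.finrank_real_complex]
  have h2 : ∫ x : I → ℂ, ∏ i, Real.exp (-a i * ‖x i‖ ^ 2) = ∏ i, (Real.pi / a i) := by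
    rw [integral_fintype_prod_volume_eq_prod (fun i (z : ℂ) => Real.exp (-a i * ‖z‖ ^ 2))]
    exact Finset.prod_congr rfl fun i _ => hint i
  simp_rw [h1]
  rw [← h2, ofReal_integral_eq_lintegral_ofReal]
  · by_contra hn
    rw [integral_undef hn] at h2
    have : 0 < ∏ i, (Real.pi / a i) := Finset.prod_pos fun i _ => div_pos Real.pi_pos (ha i)
    linarith
  · exact Filter.Eventually.of_forall fun z => Finset.prod_nonneg fun i _ => (Real.exp_pos _).le

theorem unitary_measurePreserving {I : Type} [Fintype I] [DecidableEq I]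
    (U : Matrix.unitaryGroup I ℂ) :
    MeasurePreserving (fun x : I → ℂ => U.1 *ᵥ x) volume volume := by
  have hdet : LinearMap.det ((Matrix.toLin' U.1).restrictScalars ℝ) = 1 := by
    rw [LinearMap.det_restrictScalars, LinearMap.det_toLin', Algebra.norm_complex_apply]
    have := (Matrix.det_of_mem_unitary U.2)
    have h2 := Unitary.mem_iff_star_mul_self.1 this
    have h3 : ((Complex.normSq U.1.det : ℝ) : ℂ) = 1 := by
      rw [Complex.normSq_eq_conj_mul_self]; exact h2
    exact_mod_cast h3
  refine ⟨?_, ?_⟩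
  · exact (Continuous.matrix_mulVec continuous_const continuous_id).measurable
  · have := Measure.map_linearMap_addHaar_eq_smul_addHaar (volume : Measure (I → ℂ))
      (f := (Matrix.toLin' U.1).restrictScalars ℝ) (by rw [hdet]; exact one_ne_zero)
    rw [hdet] at this
    have h2 : Measure.map (Matrix.toLin' U.1) (volume : Measure (I → ℂ)) = volume := by
      simpa using this
    exact h2

theorem unitary_compactSpace (I : Type) [Fintype I] [DecidableEq I] :
    CompactSpace (Matrix.unitaryGroup I ℂ) := by
  suffices hs : IsCompact ((Matrix.unitaryGroup I ℂ : Submonoid _) : Set (Matrix I I ℂ)) from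
    isCompact_iff_compactSpace.1 hs
  have hc : IsCompact (Set.pi Set.univ fun _ : I => Set.pi Set.univ
      fun _ : I => Metric.closedBall (0 : ℂ) 1) :=
    isCompact_univ_pi fun _ => isCompact_univ_pi fun _ => isCompact_closedBall _ _
  refine IsCompact.of_isClosed_subset hc ?_ ?_
  · have : ((Matrix.unitaryGroup I ℂ : Submonoid _) : Set (Matrix I I ℂ))
        = {A | A * star A = 1} := by
      ext A; exact Matrix.mem_unitaryGroup_iff
    rw [this]
    exact isClosed_eq (continuous_id.mul continuous_star) continuous_const
  · intro A hA i _ j _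
    simpa using entry_norm_bound_of_unitary hA i j

theorem haar_mul_right {I : Type} [Fintype I] [DecidableEq I]
    (μ : Measure (Matrix.unitaryGroup I ℂ)) [μ.IsHaarMeasure] [IsProbabilityMeasure μ]
    (V : Matrix.unitaryGroup I ℂ) : Measure.map (· * V) μ = μ := by
  have := unitary_compactSpace I
  have : IsProbabilityMeasure (Measure.map (· * V) μ) :=
    Measure.isProbabilityMeasure_map (continuous_mul_const V).aemeasurable
  exact Measure.isHaarMeasure_eq_of_isProbabilityMeasure _ _

theorem exists_unitary_col {I : Type} [Fintype I] [DecidableEq I] [Inhabited I]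
    (v : I → ℂ) (hv : ∑ i, ‖v i‖ ^ 2 = 1) :
    ∃ V : Matrix.unitaryGroup I ℂ, ∀ i, V.1 i default = v i := by
  let w : I → EuclideanSpace ℂ I := fun _ => WithLp.toLp 2 v
  have hw : Orthonormal ℂ (({default} : Set I).domRestrict w) := by
    constructor
    · intro i
      have : ‖w i‖ = 1 := by simp [w, EuclideanSpace.norm_eq, hv]
      exact this
    · intro i j hij
      exact absurd (Subsingleton.elim i j) hij
  obtain ⟨b, hb⟩ := hw.exists_orthonormalBasis_extension_of_card_eq
    (by simp) 
  refine ⟨⟨(EuclideanSpace.basisFun I ℂ).toBasis.toMatrix b, 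
    OrthonormalBasis.toMatrix_orthonormalBasis_mem_unitary _ _⟩, ?_⟩
  intro i
  have := hb default (by simp)
  simp [Module.Basis.toMatrix_apply, this, w]
theorem haar_quad_const {I : Type} [Fintype I] [DecidableEq I] [Inhabited I]
    (μ : Measure (Matrix.unitaryGroup I ℂ)) [μ.IsHaarMeasure] [IsProbabilityMeasure μ]
    (b : I → ℝ) (x : I → ℂ) (hx : x ≠ 0) :
    μ {U | 0 ≤ ∑ i, b i * ‖(U.1 *ᵥ x) i‖ ^ 2}
      = μ {U | 0 ≤ ∑ i, b i * ‖haarState U i‖ ^ 2} := by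
  have hn : 0 < ∑ i, ‖x i‖ ^ 2 := by
    obtain ⟨i, hi⟩ := Function.ne_iff.1 hx
    exact Finset.sum_pos' (fun _ _ => by positivity)
      ⟨i, Finset.mem_univ _, by have := norm_pos_iff.2 hi; positivity⟩
  set r : ℝ := Real.sqrt (∑ i, ‖x i‖ ^ 2) with hr
  have hr0 : 0 < r := Real.sqrt_pos.2 hn
  have hr2 : r ^ 2 = ∑ i, ‖x i‖ ^ 2 := Real.sq_sqrt hn.le
  obtain ⟨V, hV⟩ := exists_unitary_col (fun i => (r : ℂ)⁻¹ * x i) (by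
    simp only [norm_mul, norm_inv, Complex.norm_real, Real.norm_of_nonneg hr0.le, mul_pow]
    rw [← Finset.mul_sum, ← hr2]
    field_simp)
  have hmeas : MeasurableSet {U : Matrix.unitaryGroup I ℂ |
      0 ≤ ∑ i, b i * ‖haarState U i‖ ^ 2} := by
    apply IsClosed.measurableSet
    apply isClosed_le continuous_const
    unfold haarState
    have : ∀ i, Continuous fun U : Matrix.unitaryGroup I ℂ => U.1 i default := fun i =>
      continuous_subtype_val.matrix_elem i default
    exact continuous_finsetSum _ fun i _ => continuous_const.mul ((this i).norm.pow 2)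
  conv_rhs => rw [← haar_mul_right μ V]
  rw [Measure.map_apply (continuous_mul_const V).measurable hmeas]
  congr 1
  ext U
  simp only [Set.mem_ofPred_eq, Set.mem_preimage]
  have key : ∀ i, haarState (U * V) i = (r : ℂ)⁻¹ * (U.1 *ᵥ x) i := by
    intro i
    simp only [haarState, Submonoid.coe_mul, Matrix.mul_apply, hV, Matrix.mulVec, dotProduct,
      Finset.mul_sum]
    exact Finset.sum_congr rfl fun j _ => by ring
  have : ∑ i, b i * ‖haarState (U * V) i‖ ^ 2 = (r⁻¹) ^ 2 * ∑ i, b i * ‖(U.1 *ᵥ x) i‖ ^ 2 := by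
    rw [Finset.mul_sum]
    refine Finset.sum_congr rfl fun i _ => ?_
    rw [key, norm_mul, norm_inv, Complex.norm_real, Real.norm_of_nonneg hr0.le]
    ring
  rw [this]
  exact (mul_nonneg_iff_of_pos_left (by positivity)).symm

theorem unitary_sum_sq {I : Type} [Fintype I] [DecidableEq I]
    (U : Matrix.unitaryGroup I ℂ) (x : I → ℂ) :
    ∑ i, ‖(U.1 *ᵥ x) i‖ ^ 2 = ∑ i, ‖x i‖ ^ 2 := by
  have h : ∀ y : I → ℂ, ((∑ i, ‖y i‖ ^ 2 : ℝ) : ℂ) = star y ⬝ᵥ y := by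
    intro y
    simp [dotProduct, Complex.conj_mul']
  have h2 : star (U.1 *ᵥ x) ⬝ᵥ (U.1 *ᵥ x) = star x ⬝ᵥ x := by
    rw [Matrix.star_mulVec, ← Matrix.dotProduct_mulVec, Matrix.mulVec_mulVec,
      ← Matrix.star_eq_conjTranspose, Matrix.mem_unitaryGroup_iff'.1 U.2, Matrix.one_mulVec]
  rw [← h, ← h] at h2
  exact_mod_cast h2

theorem tail_diag {I : Type} [Fintype I] [DecidableEq I] [Inhabited I]
    (μ : Measure (Matrix.unitaryGroup I ℂ)) [μ.IsHaarMeasure] [IsProbabilityMeasure μ]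
    (b : I → ℝ) (hb : ∀ i, b i < 1) :
    μ {U | 0 ≤ ∑ i, b i * ‖haarState U i‖ ^ 2} ≤ ENNReal.ofReal (∏ i, (1 - b i)⁻¹) := by
  set p := μ {U | 0 ≤ ∑ i, b i * ‖haarState U i‖ ^ 2} with hp
  let w : (I → ℂ) → ENNReal := fun x => ENNReal.ofReal (Real.exp (-∑ i, 1 * ‖x i‖ ^ 2))
  have hwm : Measurable w := by
    apply Measurable.ennreal_ofReal
    apply Continuous.measurable
    fun_prop
  have hZ : ∫⁻ x, w x = ENNReal.ofReal (Real.pi ^ Fintype.card I) := by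
    have := gauss_pi (I := I) (fun _ => 1) (fun _ => one_pos)
    simpa [w] using this
  let S : Set (Matrix.unitaryGroup I ℂ × (I → ℂ)) :=
    {z | 0 ≤ ∑ i, b i * ‖(z.1.1 *ᵥ z.2) i‖ ^ 2}
  have hS : MeasurableSet S := by
    have := unitary_compactSpace I
    have : SecondCountableTopology (Matrix I I ℂ) :=
      inferInstanceAs (SecondCountableTopology (I → I → ℂ))
    have : SecondCountableTopology (Matrix.unitaryGroup I ℂ) :=
      TopologicalSpace.Subtype.secondCountableTopology _
    apply IsClosed.measurableSet
    apply isClosed_le continuous_const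
    have : Continuous fun z : Matrix.unitaryGroup I ℂ × (I → ℂ) => z.1.1 *ᵥ z.2 :=
      Continuous.matrix_mulVec (continuous_subtype_val.comp continuous_fst) continuous_snd
    have h2 : ∀ i, Continuous fun z : Matrix.unitaryGroup I ℂ × (I → ℂ) => (z.1.1 *ᵥ z.2) i :=
      fun i => (continuous_apply i).comp this
    fun_prop
  let F : Matrix.unitaryGroup I ℂ → (I → ℂ) → ENNReal := fun U x =>
    S.indicator (fun z => w z.2) (U, x)
  have hF : Measurable (Function.uncurry F) := by
    exact (hwm.comp measurable_snd).indicator hS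
  -- first order of integration
  have h1 : ∫⁻ x, ∫⁻ U, F U x ∂μ = p * ENNReal.ofReal (Real.pi ^ Fintype.card I) := by
    rw [← hZ, ← lintegral_const_mul _ hwm]
    apply lintegral_congr_ae
    have hne : ∀ᵐ x : I → ℂ, x ≠ 0 := by
      simp [ae_iff, measure_singleton]
    filter_upwards [hne] with x hx
    have hxS : MeasurableSet {U : Matrix.unitaryGroup I ℂ | (U, x) ∈ S} :=
      measurable_prodMk_right hS
    have : ∀ U, F U x = {U : Matrix.unitaryGroup I ℂ | (U, x) ∈ S}.indicator (fun _ => w x) U := by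
      intro U; simp only [F, Set.indicator, Set.mem_ofPred_eq]
    simp_rw [this]
    rw [lintegral_indicator_const hxS, mul_comm]
    congr 1
    exact haar_quad_const μ b x hx
  have h2 : ∀ U, ∫⁻ x, F U x ≤ ENNReal.ofReal (∏ i, (Real.pi / (1 - b i))) := by
    intro U
    rw [← gauss_pi (fun i => 1 - b i) (fun i => by linarith [hb i])]
    let G : (I → ℂ) → ENNReal := fun y =>
      ENNReal.ofReal (Real.exp (-∑ i, (1 - b i) * ‖y i‖ ^ 2))
    have hG : Measurable G := by
      apply Measurable.ennreal_ofReal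
      apply Continuous.measurable
      fun_prop
    change _ ≤ ∫⁻ y, G y
    rw [← (unitary_measurePreserving U).lintegral_comp hG]
    apply lintegral_mono
    intro x
    simp only [F, Set.indicator]
    split_ifs with h
    · simp only [w, G]
      apply ENNReal.ofReal_le_ofReal
      apply Real.exp_le_exp.2
      have h' : 0 ≤ ∑ i, b i * ‖(U.1 *ᵥ x) i‖ ^ 2 := h
      simp only [sub_mul, one_mul, Finset.sum_sub_distrib]
      rw [unitary_sum_sq]
      linarith
    · exact zero_le
  have h3 : ∫⁻ x, ∫⁻ U, F U x ∂μ = ∫⁻ U, ∫⁻ x, F U x ∂volume ∂μ :=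
    (lintegral_lintegral_swap hF.aemeasurable).symm
  have h4 : p * ENNReal.ofReal (Real.pi ^ Fintype.card I)
      ≤ ENNReal.ofReal (∏ i, (Real.pi / (1 - b i))) := by
    rw [← h1, h3]
    calc _ ≤ ∫⁻ U, ENNReal.ofReal (∏ i, (Real.pi / (1 - b i))) ∂μ := lintegral_mono h2
      _ = _ := by simp
  have hpi : 0 < Real.pi ^ Fintype.card I := by positivity
  have h5 : ENNReal.ofReal (∏ i, (Real.pi / (1 - b i)))
      = ENNReal.ofReal (∏ i, (1 - b i)⁻¹) * ENNReal.ofReal (Real.pi ^ Fintype.card I) := by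
    rw [← ENNReal.ofReal_mul' hpi.le]
    congr 1
    simp only [div_eq_mul_inv, Finset.prod_mul_distrib, Finset.prod_const, Finset.card_univ]
    ring
  rw [h5] at h4
  exact (ENNReal.mul_le_mul_iff_left (ENNReal.ofReal_pos.2 hpi).ne' ENNReal.ofReal_ne_top).1 h4
theorem tail_proj {t : ℝ} (ht : 1 / 4 < t) (ht1 : t ≤ 1) : ∃ α : ℝ, 0 < α ∧
    ∀ (I : Type) [Fintype I] [DecidableEq I] [Inhabited I]
      (μ : Measure (Matrix.unitaryGroup I ℂ)) [μ.IsHaarMeasure] [IsProbabilityMeasure μ]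
      (P : Matrix I I ℂ), P.IsHermitian → P * P = P → 4 * P.trace = (Fintype.card I : ℂ) →
      μ {U | t ≤ (star (haarState U) ⬝ᵥ P *ᵥ haarState U).re}
        ≤ ENNReal.ofReal (Real.exp (-(α * Fintype.card I))) := by
  set s : ℝ := t - 1 / 4 with hs
  have hs0 : 0 < s := by linarith
  have hs1 : s < 1 := by linarith
  have hp1 : 0 < 1 - s * (1 - t) := by nlinarith
  have hp0 : 0 < 1 + s * t := by nlinarith
  set L1 := Real.log (1 - s * (1 - t)) with hL1
  set L0 := Real.log (1 + s * t) with hL0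
  have hα : 0 < L1 / 4 + 3 * L0 / 4 := by
    have h1 : 1 - (1 - s * (1 - t))⁻¹ ≤ L1 := Real.one_sub_inv_le_log_of_pos hp1
    have h0 : 1 - (1 + s * t)⁻¹ ≤ L0 := Real.one_sub_inv_le_log_of_pos hp0
    have key : 0 < (1 - (1 - s * (1 - t))⁻¹) + 3 * (1 - (1 + s * t)⁻¹) := by
      have : (1 - (1 - s * (1 - t))⁻¹) + 3 * (1 - (1 + s * t)⁻¹)
          = (4 * s ^ 2 * (1 - t * (1 - t))) / ((1 - s * (1 - t)) * (1 + s * t)) := by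
        have ht' : t = s + 1 / 4 := by linarith
        field_simp
        rw [ht']
        ring
      rw [this]
      apply div_pos _ (mul_pos hp1 hp0)
      have : 0 < 1 - t * (1 - t) := by nlinarith
      positivity
    linarith
  refine ⟨L1 / 4 + 3 * L0 / 4, hα, ?_⟩
  intro I _ _ _ μ _ _ P hP hPP htr
  let l : I → ℝ := hP.eigenvalues
  let W : Matrix.unitaryGroup I ℂ := hP.eigenvectorUnitary
  have hspec : P = W.1 * Matrix.diagonal (fun i => (l i : ℂ)) * (W.1)ᴴ := by
    have := hP.spectral_theorem
    rw [Unitary.conjStarAlgAut_apply] at this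
    exact this
  have hWW : (W.1)ᴴ * W.1 = 1 := Matrix.mem_unitaryGroup_iff'.1 W.2
  have hl : ∀ i, l i = 0 ∨ l i = 1 := by
    have h1 : Matrix.diagonal (fun i => (l i : ℂ)) * Matrix.diagonal (fun i => (l i : ℂ))
        = Matrix.diagonal (fun i => (l i : ℂ)) := by
      have h2 : Matrix.diagonal (fun i => (l i : ℂ)) = (W.1)ᴴ * P * W.1 := by
        rw [hspec]
        simp only [Matrix.mul_assoc, hWW, Matrix.mul_one]
        rw [← Matrix.mul_assoc, hWW, Matrix.one_mul]
      have hWW' : W.1 * (W.1)ᴴ = 1 := Matrix.mem_unitaryGroup_iff.1 W.2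
      rw [h2]
      calc (W.1)ᴴ * P * W.1 * ((W.1)ᴴ * P * W.1)
          = (W.1)ᴴ * (P * (W.1 * (W.1)ᴴ) * P) * W.1 := by simp only [Matrix.mul_assoc]
        _ = _ := by rw [hWW', Matrix.mul_one, hPP]
    intro i
    have h3 := congrFun (congrFun h1 i) i
    simp only [Matrix.diagonal_mul_diagonal, Matrix.diagonal_apply_eq] at h3
    have h4 : l i * l i = l i := by exact_mod_cast h3
    have h5 : l i * (l i - 1) = 0 := by linarith
    rcases mul_eq_zero.1 h5 with h | h
    · exact Or.inl h
    · exact Or.inr (by linarith)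
  have hsum : ∑ i, l i = (Fintype.card I : ℝ) / 4 := by
    have h1 : P.trace = ∑ i, (l i : ℂ) := hP.trace_eq_sum_eigenvalues
    rw [h1] at htr
    have : 4 * ∑ i, l i = (Fintype.card I : ℝ) := by exact_mod_cast htr
    linarith
  have hquad : ∀ x : I → ℂ, (star x ⬝ᵥ P *ᵥ x).re = ∑ i, l i * ‖((W⁻¹).1 *ᵥ x) i‖ ^ 2 := by
    intro x
    have hinv : (W⁻¹).1 = (W.1)ᴴ := rfl
    rw [hinv]
    have h1 : star x ⬝ᵥ P *ᵥ x = star ((W.1)ᴴ *ᵥ x) ⬝ᵥ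
        (Matrix.diagonal (fun i => (l i : ℂ)) *ᵥ ((W.1)ᴴ *ᵥ x)) := by
      rw [Matrix.star_mulVec, Matrix.conjTranspose_conjTranspose, ← Matrix.dotProduct_mulVec,
        Matrix.mulVec_mulVec, Matrix.mulVec_mulVec, ← hspec]
    rw [h1]
    simp only [dotProduct, Matrix.mulVec_diagonal, Complex.re_sum]
    refine Finset.sum_congr rfl fun i _ => ?_
    rw [Pi.star_apply]
    generalize ((W.1)ᴴ *ᵥ x) i = z
    rw [mul_left_comm, Complex.star_def, Complex.conj_mul', Complex.re_ofReal_mul]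
    norm_cast
  have hcol : ∀ U : Matrix.unitaryGroup I ℂ, (W⁻¹).1 *ᵥ haarState U = haarState (W⁻¹ * U) := by
    intro U
    ext i
    simp [haarState, Matrix.mulVec, dotProduct, Matrix.mul_apply]
  have hnorm : ∀ U : Matrix.unitaryGroup I ℂ, ∑ i, ‖haarState U i‖ ^ 2 = 1 := by
    intro U
    have h1 := unitary_sum_sq U (Pi.single default 1)
    have h2 : U.1 *ᵥ (Pi.single default 1) = haarState U := by
      ext i; simp [haarState]
    rw [h2] at h1
    rw [h1, Finset.sum_eq_single default]
    · simp
    · intro j _ hj; simp [hj]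
    · simp
  have hset : {U : Matrix.unitaryGroup I ℂ | t ≤ (star (haarState U) ⬝ᵥ P *ᵥ haarState U).re}
      = (fun U => W⁻¹ * U) ⁻¹' {U | 0 ≤ ∑ i, (s * (l i - t)) * ‖haarState U i‖ ^ 2} := by
    ext U
    simp only [Set.mem_ofPred_eq, Set.mem_preimage]
    rw [hquad, hcol]
    have : ∑ i, (s * (l i - t)) * ‖haarState (W⁻¹ * U) i‖ ^ 2
        = s * (∑ i, l i * ‖haarState (W⁻¹ * U) i‖ ^ 2 - t) := by
      have h1 := hnorm (W⁻¹ * U)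
      calc _ = s * (∑ i, l i * ‖haarState (W⁻¹ * U) i‖ ^ 2
            - t * ∑ i, ‖haarState (W⁻¹ * U) i‖ ^ 2) := by
            rw [Finset.mul_sum, ← Finset.sum_sub_distrib, Finset.mul_sum]
            exact Finset.sum_congr rfl fun i _ => by ring
        _ = _ := by rw [h1, mul_one]
    rw [this, mul_nonneg_iff_of_pos_left hs0, sub_nonneg]
  rw [hset, measure_preimage_mul]
  have hb : ∀ i, s * (l i - t) < 1 := by
    intro i
    rcases hl i with h | h <;> rw [h] <;> linarith
  refine (tail_diag μ _ hb).trans (ENNReal.ofReal_le_ofReal (le_of_eq ?_))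
  have hterm : ∀ i, (1 - s * (l i - t))⁻¹ = Real.exp (-(l i * L1 + (1 - l i) * L0)) := by
    intro i
    rcases hl i with h | h <;> rw [h]
    · rw [Real.exp_neg]; simp only [zero_mul, zero_add, sub_zero, one_mul, hL0]
      rw [Real.exp_log hp0]; congr 1; ring
    · rw [Real.exp_neg]; simp only [one_mul, sub_self, zero_mul, add_zero, hL1]
      rw [Real.exp_log hp1]
  simp_rw [hterm]
  rw [← Real.exp_sum]
  congr 1
  have : ∑ i, -(l i * L1 + (1 - l i) * L0)
      = -((∑ i, l i) * L1 + ((Fintype.card I : ℝ) - ∑ i, l i) * L0) := by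
    rw [Finset.sum_neg_distrib, Finset.sum_add_distrib, ← Finset.sum_mul, ← Finset.sum_mul,
      Finset.sum_sub_distrib]
    simp
  rw [this, hsum]
  ring

section L2
open scoped Matrix.Norms.L2Operator

def kronLeft (A B : Type) [Fintype A] [DecidableEq A] [Fintype B] [DecidableEq B] :
    Matrix A A ℂ →⋆ₙₐ[ℂ] Matrix (A × B) (A × B) ℂ where
  toFun X := X ⊗ₖ (1 : Matrix B B ℂ)
  map_smul' c X := by simp [Matrix.smul_kronecker]
  map_zero' := by simp
  map_add' X Y := by simp [Matrix.add_kronecker]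
  map_mul' X Y := by rw [← Matrix.mul_kronecker_mul, Matrix.mul_one]
  map_star' X := by
    simp only [Matrix.star_eq_conjTranspose, Matrix.conjTranspose_kronecker,
      Matrix.conjTranspose_one]

def kronRight (A B : Type) [Fintype A] [DecidableEq A] [Fintype B] [DecidableEq B] :
    Matrix B B ℂ →⋆ₙₐ[ℂ] Matrix (A × B) (A × B) ℂ where
  toFun X := (1 : Matrix A A ℂ) ⊗ₖ X
  map_smul' c X := by simp [Matrix.kronecker_smul]
  map_zero' := by simp
  map_add' X Y := by simp [Matrix.kronecker_add]
  map_mul' X Y := by rw [← Matrix.mul_kronecker_mul, Matrix.mul_one]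
  map_star' X := by
    simp only [Matrix.star_eq_conjTranspose, Matrix.conjTranspose_kronecker,
      Matrix.conjTranspose_one]

theorem norm_kronLeft {A B : Type} [Fintype A] [DecidableEq A] [Fintype B] [DecidableEq B]
    (X : Matrix A A ℂ) : ‖X ⊗ₖ (1 : Matrix B B ℂ)‖ ≤ ‖X‖ := by
  let _ : CStarAlgebra (Matrix A A ℂ) := {}
  let _ : CStarAlgebra (Matrix (A × B) (A × B) ℂ) := {}
  exact NonUnitalStarAlgHom.norm_apply_le (kronLeft A B) X

theorem norm_kronRight {A B : Type} [Fintype A] [DecidableEq A] [Fintype B] [DecidableEq B]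
    (X : Matrix B B ℂ) : ‖(1 : Matrix A A ℂ) ⊗ₖ X‖ ≤ ‖X‖ := by
  let _ : CStarAlgebra (Matrix B B ℂ) := {}
  let _ : CStarAlgebra (Matrix (A × B) (A × B) ℂ) := {}
  exact NonUnitalStarAlgHom.norm_apply_le (kronRight A B) X

end L2
theorem eprProj_herm (nA nB : ℕ) (hA : 0 < nA) (hB : 0 < nB) :
    (eprProjOne nA nB hA hB).IsHermitian := by
  ext p q
  simp only [Matrix.conjTranspose_apply, eprProjOne, Matrix.of_apply]
  have : (q.1 ⟨0, hA⟩ = q.2 ⟨0, hB⟩ ∧ p.1 ⟨0, hA⟩ = p.2 ⟨0, hB⟩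
        ∧ (∀ k : Fin nA, 1 ≤ (k : ℕ) → q.1 k = p.1 k)
        ∧ (∀ k : Fin nB, 1 ≤ (k : ℕ) → q.2 k = p.2 k)) ↔
      (p.1 ⟨0, hA⟩ = p.2 ⟨0, hB⟩ ∧ q.1 ⟨0, hA⟩ = q.2 ⟨0, hB⟩
        ∧ (∀ k : Fin nA, 1 ≤ (k : ℕ) → p.1 k = q.1 k)
        ∧ (∀ k : Fin nB, 1 ≤ (k : ℕ) → p.2 k = q.2 k)) := by
    constructor <;> rintro ⟨h1, h2, h3, h4⟩ <;>
      exact ⟨h2, h1, fun k hk => (h3 k hk).symm, fun k hk => (h4 k hk).symm⟩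
  by_cases h : (p.1 ⟨0, hA⟩ = p.2 ⟨0, hB⟩ ∧ q.1 ⟨0, hA⟩ = q.2 ⟨0, hB⟩
        ∧ (∀ k : Fin nA, 1 ≤ (k : ℕ) → p.1 k = q.1 k)
        ∧ (∀ k : Fin nB, 1 ≤ (k : ℕ) → p.2 k = q.2 k))
  · rw [if_pos h, if_pos (this.2 h)]; simp
  · rw [if_neg h, if_neg (fun h' => h (this.1 h'))]; simp

theorem eprProj_cons (m k : ℕ) (x y x' y' : Fin 2) (p p' : Fin m → Fin 2) (q q' : Fin k → Fin 2) :
    eprProjOne (m + 1) (k + 1) m.succ_pos k.succ_pos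
      (Fin.cons x p, Fin.cons y q) (Fin.cons x' p', Fin.cons y' q')
    = if x = y ∧ x' = y' ∧ p = p' ∧ q = q' then (2 : ℂ)⁻¹ else 0 := by
  have key : ∀ (n : ℕ) (x x' : Fin 2) (p p' : Fin n → Fin 2),
      (∀ k : Fin (n + 1), 1 ≤ (k : ℕ) → (Fin.cons x p : Fin (n + 1) → Fin 2) k
        = (Fin.cons x' p' : Fin (n + 1) → Fin 2) k) ↔ p = p' := by
    intro n x x' p p'
    rw [Fin.forall_fin_succ]
    simp [funext_iff]
  simp only [eprProjOne, Matrix.of_apply]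
  simp only [key, show (⟨0, m.succ_pos⟩ : Fin (m + 1)) = 0 from rfl,
    show (⟨0, k.succ_pos⟩ : Fin (k + 1)) = 0 from rfl, Fin.cons_zero]

theorem sum_cons {n : ℕ} (f : (Fin (n + 1) → Fin 2) → ℂ) :
    ∑ v, f v = ∑ x : Fin 2, ∑ p : Fin n → Fin 2, f (Fin.cons x p) := by
  rw [← Fintype.sum_prod_type' (f := fun x p => f (Fin.cons x p))]
  exact (Fintype.sum_equiv (Fin.consEquiv fun _ => Fin 2) _ _ (fun _ => rfl)).symm

theorem eprProj_idem (nA nB : ℕ) (hA : 0 < nA) (hB : 0 < nB) :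
    eprProjOne nA nB hA hB * eprProjOne nA nB hA hB = eprProjOne nA nB hA hB := by
  obtain ⟨m, rfl⟩ : ∃ m, nA = m + 1 := ⟨nA - 1, by omega⟩
  obtain ⟨k, rfl⟩ : ∃ m, nB = m + 1 := ⟨nB - 1, by omega⟩
  ext ⟨p, q⟩ ⟨p', q'⟩
  rw [Matrix.mul_apply, Fintype.sum_prod_type, sum_cons]
  simp_rw [sum_cons]
  refine Fin.consCases (fun x p => ?_) p
  refine Fin.consCases (fun y q => ?_) q
  refine Fin.consCases (fun x' p' => ?_) p'
  refine Fin.consCases (fun y' q' => ?_) q'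
  simp_rw [eprProj_cons]
  have h1 : ∀ (u : Fin 2) (v : Fin m → Fin 2) (u' : Fin 2) (v' : Fin k → Fin 2),
      (if x = y ∧ u = u' ∧ p = v ∧ q = v' then (2 : ℂ)⁻¹ else 0) *
        (if u = u' ∧ x' = y' ∧ v = p' ∧ v' = q' then (2 : ℂ)⁻¹ else 0)
      = if v' = q then (if u' = u then (if v = p then
          (if x = y ∧ x' = y' ∧ p = p' ∧ q = q' then (4 : ℂ)⁻¹ else 0) else 0) else 0) else 0 := by
    intro u v u' v'
    by_cases hv : v = p
    · by_cases hv' : v' = q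
      · by_cases hu : u' = u
        · subst hv hv' hu
          by_cases hx : x = y <;> by_cases hx' : x' = y' <;> by_cases hp : v = p' <;>
            by_cases hq : v' = q' <;> simp [hx, hx', hp, hq] <;> norm_num
        · simp [hu, Ne.symm hu]
      · simp [hv', Ne.symm hv']
    · simp [hv, Ne.symm hv]
  simp_rw [h1]
  simp only [Finset.sum_ite_eq', Finset.mem_univ, if_true, Finset.sum_const, Finset.card_univ,
    Fintype.card_fin]
  split_ifs <;> norm_num

theorem eprProj_trace (nA nB : ℕ) (hA : 0 < nA) (hB : 0 < nB) :
    4 * (eprProjOne nA nB hA hB).trace = (2 : ℂ) ^ nA * 2 ^ nB := by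
  obtain ⟨m, rfl⟩ : ∃ m, nA = m + 1 := ⟨nA - 1, by omega⟩
  obtain ⟨k, rfl⟩ : ∃ m, nB = m + 1 := ⟨nB - 1, by omega⟩
  rw [Matrix.trace, Fintype.sum_prod_type, sum_cons]
  simp_rw [sum_cons, Matrix.diag_apply, eprProj_cons]
  simp only [and_true, and_self]
  simp
  ring

set_option linter.unusedSectionVars false

/-- The projector on the full system. -/
def liftC {A B : Type} (C : Type) [DecidableEq C] (M : Matrix (A × B) (A × B) ℂ) :
    Matrix (A × B × C) (A × B × C) ℂ :=
  (M ⊗ₖ (1 : Matrix C C ℂ)).submatrix (Equiv.prodAssoc A B C).symm (Equiv.prodAssoc A B C).symm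

section
variable {A B C : Type} [Fintype A] [DecidableEq A] [Fintype B] [DecidableEq B]
  [Fintype C] [DecidableEq C]

theorem liftC_herm {M : Matrix (A × B) (A × B) ℂ} (h : M.IsHermitian) :
    (liftC C M).IsHermitian := by
  apply Matrix.IsHermitian.submatrix
  rw [Matrix.IsHermitian, Matrix.conjTranspose_kronecker, h.eq, Matrix.conjTranspose_one]

theorem liftC_idem {M : Matrix (A × B) (A × B) ℂ} (h : M * M = M) :
    liftC C M * liftC C M = liftC C M := by
  rw [liftC, Matrix.submatrix_mul_equiv, ← Matrix.mul_kronecker_mul, h, Matrix.one_mul]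

theorem liftC_trace (M : Matrix (A × B) (A × B) ℂ) :
    (liftC C M).trace = M.trace * Fintype.card C := by
  rw [← Matrix.trace_one, ← Matrix.trace_kronecker]
  exact Fintype.sum_equiv (Equiv.prodAssoc A B C).symm _ _ fun _ => rfl

def kronU (UA : Matrix.unitaryGroup A ℂ) (UB : Matrix.unitaryGroup B ℂ) (C : Type)
    [Fintype C] [DecidableEq C] : Matrix.unitaryGroup (A × B × C) ℂ :=
  ⟨UA.1 ⊗ₖ (UB.1 ⊗ₖ (1 : Matrix C C ℂ)),
    Matrix.kronecker_mem_unitary UA.2 (Matrix.kronecker_mem_unitary UB.2 (one_mem _))⟩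

theorem trace_eq (UA : Matrix.unitaryGroup A ℂ) (UB : Matrix.unitaryGroup B ℂ)
    (ψ : A × B × C → ℂ) (M : Matrix (A × B) (A × B) ℂ) :
    Matrix.trace ((UA.1 ⊗ₖ UB.1) * rhoAB ψ * (UA.1 ⊗ₖ UB.1)ᴴ * M)
      = star ((kronU UA UB C).1 *ᵥ ψ) ⬝ᵥ (liftC C M *ᵥ ((kronU UA UB C).1 *ᵥ ψ)) := by
  let X : Matrix (A × B) C ℂ := Matrix.of fun p c => ψ (p.1, p.2, c)
  have h1 : rhoAB ψ = X * Xᴴ := by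
    ext p q
    simp [rhoAB, X, Matrix.mul_apply]
  have h2 : ∀ a b c, ((kronU UA UB C).1 *ᵥ ψ) (a, b, c) = ((UA.1 ⊗ₖ UB.1) * X) (a, b) c := by
    intro a b c
    simp only [kronU, Matrix.mulVec, dotProduct, Matrix.mul_apply, Fintype.sum_prod_type,
      Matrix.kroneckerMap_apply, X, Matrix.of_apply]
    refine Finset.sum_congr rfl fun a' _ => Finset.sum_congr rfl fun b' _ => ?_
    simp [Matrix.one_apply]
  set φ := (kronU UA UB C).1 *ᵥ ψ
  have h3 : (UA.1 ⊗ₖ UB.1) * rhoAB ψ * (UA.1 ⊗ₖ UB.1)ᴴ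
      = ((UA.1 ⊗ₖ UB.1) * X) * ((UA.1 ⊗ₖ UB.1) * X)ᴴ := by
    rw [h1, Matrix.conjTranspose_mul]; simp only [Matrix.mul_assoc]
  rw [h3]
  generalize (UA.1 ⊗ₖ UB.1) * X = Y at *
  rw [Matrix.mul_assoc, Matrix.trace_mul_comm, Matrix.mul_assoc]
  have h4 : ∀ p q c c', liftC C M (p.1, p.2, c) (q.1, q.2, c') = M p q * (if c = c' then 1 else 0) := by
    intro p q c c'
    simp [liftC, Matrix.one_apply]
  have h5 : star φ ⬝ᵥ (liftC C M *ᵥ φ)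
      = ∑ p : A × B, ∑ c : C, star (φ (p.1, p.2, c)) *
        ∑ q : A × B, ∑ c' : C, liftC C M (p.1, p.2, c) (q.1, q.2, c') * φ (q.1, q.2, c') := by
    simp only [dotProduct, Matrix.mulVec, Fintype.sum_prod_type, Pi.star_apply]
  rw [h5]
  simp only [h4, h2]
  simp only [mul_ite, mul_one, mul_zero, ite_mul, zero_mul, Finset.sum_ite_eq, Finset.mem_univ,
    if_true]
  rw [Matrix.trace, Finset.sum_comm]
  refine Finset.sum_congr rfl fun c _ => ?_
  rw [Matrix.diag_apply, Matrix.mul_apply]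
  refine Finset.sum_congr rfl fun p _ => ?_
  rw [Matrix.conjTranspose_apply, Matrix.mul_apply]

end

section L2
open scoped Matrix.Norms.L2Operator
variable {A B C : Type} [Fintype A] [DecidableEq A] [Fintype B] [DecidableEq B]
  [Fintype C] [DecidableEq C]

theorem kronU_lip (UA VA : Matrix.unitaryGroup A ℂ) (UB VB : Matrix.unitaryGroup B ℂ) :
    ‖(kronU UA UB C).1 - (kronU VA VB C).1‖ ≤ ‖UA.1 - VA.1‖ + ‖UB.1 - VB.1‖ := by
  have h : (kronU UA UB C).1 - (kronU VA VB C).1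
      = ((UA.1 - VA.1) ⊗ₖ (1 : Matrix (B × C) (B × C) ℂ)) * (kronU 1 UB C).1
        + (kronU VA 1 C).1 * ((1 : Matrix A A ℂ) ⊗ₖ ((UB.1 - VB.1) ⊗ₖ (1 : Matrix C C ℂ))) := by
    have e1 : (kronU UA UB C).1 = (UA.1 ⊗ₖ (1 : Matrix (B × C) (B × C) ℂ)) * (kronU 1 UB C).1 := by
      simp [kronU, ← Matrix.mul_kronecker_mul]
    have e2 : (kronU VA VB C).1 = (kronU VA 1 C).1 *
        ((1 : Matrix A A ℂ) ⊗ₖ (VB.1 ⊗ₖ (1 : Matrix C C ℂ))) := by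
      simp [kronU, ← Matrix.mul_kronecker_mul]
    have e3 : (VA.1 ⊗ₖ (1 : Matrix (B × C) (B × C) ℂ)) * (kronU 1 UB C).1 = (kronU VA 1 C).1 *
        ((1 : Matrix A A ℂ) ⊗ₖ (UB.1 ⊗ₖ (1 : Matrix C C ℂ))) := by
      simp [kronU, ← Matrix.mul_kronecker_mul]
    have s1 : (UA.1 - VA.1) ⊗ₖ (1 : Matrix (B × C) (B × C) ℂ)
        = UA.1 ⊗ₖ (1 : Matrix (B × C) (B × C) ℂ) - VA.1 ⊗ₖ (1 : Matrix (B × C) (B × C) ℂ) := by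
      ext p q; simp [sub_mul]
    have s2 : (1 : Matrix A A ℂ) ⊗ₖ ((UB.1 - VB.1) ⊗ₖ (1 : Matrix C C ℂ))
        = (1 : Matrix A A ℂ) ⊗ₖ (UB.1 ⊗ₖ (1 : Matrix C C ℂ))
          - (1 : Matrix A A ℂ) ⊗ₖ (VB.1 ⊗ₖ (1 : Matrix C C ℂ)) := by
      ext p q; simp [sub_mul, mul_sub]
    rw [s1, s2, Matrix.sub_mul,
      Matrix.mul_sub, ← e1, ← e2, e3]
    abel
  rw [h]
  have hn1 : ‖(kronU (1 : Matrix.unitaryGroup A ℂ) UB C).1‖ ≤ 1 := unitary_norm_le _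
  have hn2 : ‖(kronU VA (1 : Matrix.unitaryGroup B ℂ) C).1‖ ≤ 1 := unitary_norm_le _
  refine (norm_add_le _ _).trans (add_le_add ?_ ?_)
  · refine (norm_mul_le _ _).trans ?_
    calc _ ≤ ‖UA.1 - VA.1‖ * 1 := by
          gcongr
          exact norm_kronLeft _
      _ = _ := mul_one _
  · refine (norm_mul_le _ _).trans ?_
    calc _ ≤ 1 * ‖UB.1 - VB.1‖ := by
          gcongr
          exact (norm_kronRight _).trans (norm_kronLeft _)
      _ = _ := one_mul _

theorem proj_norm {I : Type} [Fintype I] [DecidableEq I] {P : Matrix I I ℂ}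
    (hP : P.IsHermitian) (hPP : P * P = P) (x : I → ℂ) :
    (star x ⬝ᵥ P *ᵥ x).re = ‖WithLp.toLp 2 (P *ᵥ x)‖ ^ 2 := by
  have h : star x ⬝ᵥ P *ᵥ x = star (P *ᵥ x) ⬝ᵥ (P *ᵥ x) := by
    rw [Matrix.star_mulVec, hP.eq, ← Matrix.dotProduct_mulVec, Matrix.mulVec_mulVec, hPP]
  rw [h, EuclideanSpace.norm_sq_eq]
  simp only [dotProduct, Complex.re_sum, Pi.star_apply, Complex.star_def, Complex.conj_mul']
  norm_cast

theorem proj_lip {I : Type} [Fintype I] [DecidableEq I] {P : Matrix I I ℂ}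
    (hP : P.IsHermitian) (hPP : P * P = P) (V W : Matrix I I ℂ) (x : I → ℂ)
    (hx : ∑ i, ‖x i‖ ^ 2 = 1) :
    ‖WithLp.toLp 2 (P *ᵥ (V *ᵥ x))‖ ≤ ‖WithLp.toLp 2 (P *ᵥ (W *ᵥ x))‖ + ‖V - W‖ := by
  have hP1 : ‖P‖ ≤ 1 := by
    have h1 : ‖P‖ = ‖P‖ * ‖P‖ := by
      have := Matrix.l2_opNorm_conjTranspose_mul_self P
      rwa [hP.eq, hPP] at this
    nlinarith [norm_nonneg P]
  have hxn : ‖WithLp.toLp 2 x‖ = 1 := by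
    rw [EuclideanSpace.norm_eq]; simp [hx]
  have h1 : WithLp.toLp 2 (P *ᵥ (V *ᵥ x))
      = WithLp.toLp 2 (P *ᵥ (W *ᵥ x)) + WithLp.toLp 2 ((P * (V - W)) *ᵥ x) := by
    rw [← WithLp.toLp_add, Matrix.mulVec_mulVec, Matrix.mulVec_mulVec, ← Matrix.add_mulVec,
      Matrix.mul_sub, add_sub_cancel]
  rw [h1]
  refine (norm_add_le _ _).trans (add_le_add le_rfl ?_)
  have h2 := Matrix.l2_opNorm_mulVec (P * (V - W)) (WithLp.toLp 2 x)
  rw [hxn, mul_one] at h2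
  refine le_trans h2 ?_
  refine (norm_mul_le _ _).trans ?_
  calc _ ≤ 1 * ‖V - W‖ := by gcongr
    _ = _ := one_mul _
end L2

theorem haarState_sum {I : Type} [Fintype I] [DecidableEq I] [Inhabited I]
    (U : Matrix.unitaryGroup I ℂ) : ∑ i, ‖haarState U i‖ ^ 2 = 1 := by
  have h1 := unitary_sum_sq U (Pi.single default 1)
  have h2 : U.1 *ᵥ (Pi.single default 1) = haarState U := by
    ext i; simp [haarState]
  rw [h2] at h1
  rw [h1, Finset.sum_eq_single default]
  · simp
  · intro j _ hj; simp [hj]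
  · simp

theorem haarState_mul {I : Type} [Fintype I] [DecidableEq I] [Inhabited I]
    (V U : Matrix.unitaryGroup I ℂ) : haarState (V * U) = V.1 *ᵥ haarState U := by
  ext i
  simp [haarState, Matrix.mulVec, dotProduct, Matrix.mul_apply]

/-- **Theorem 1** (informal): for `1/2 < h ≤ 1` (so `δ = h² - 1/4 > 0`) there are
constants `α > 0` and `C > 0` such that the Haar probability that one EPR pair is
LU-distillable from `ρ_AB` at fidelity `h` satisfies
`log Prob ≤ -α d + C (d_A² + d_B²)`, i.e. `Prob ≤ exp(-α d + C (d_A² + d_B²))`. -/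
theorem epr_distillation_exponentially_suppressed (h : ℝ) (hh : 1 / 2 < h) (hh1 : h ≤ 1) :
    ∃ α : ℝ, 0 < α ∧ ∃ C : ℝ, 0 < C ∧
      ∀ (nA nB nC : ℕ) (hA : 0 < nA) (hB : 0 < nB), 0 < nC →
      ∀ μ : Measure (Matrix.unitaryGroup (QubitIdx nA × QubitIdx nB × QubitIdx nC) ℂ),
        μ.IsHaarMeasure → IsProbabilityMeasure μ →
        μ {U | ∃ UA : Matrix.unitaryGroup (QubitIdx nA) ℂ,
               ∃ UB : Matrix.unitaryGroup (QubitIdx nB) ℂ,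
               h ^ 2 ≤ (Matrix.trace ((UA.1 ⊗ₖ UB.1) * rhoAB (haarState U) *
                          (UA.1 ⊗ₖ UB.1)ᴴ * eprProjOne nA nB hA hB)).re}
          ≤ ENNReal.ofReal (Real.exp
              (-(α * 2 ^ (nA + nB + nC))
                + C * (((2 : ℝ) ^ nA) ^ 2 + ((2 : ℝ) ^ nB) ^ 2))) := by
  have hε : 0 < (h - 1 / 2) / 4 := by linarith
  obtain ⟨C, hC, hnet⟩ := unitary_net hε
  obtain ⟨α, hα, htail⟩ := tail_proj (t := (h / 2 + 1 / 4) ^ 2) (by nlinarith) (by nlinarith)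
  refine ⟨α, hα, C, hC, ?_⟩
  intro nA nB nC hA hB _ μ hμ hμp
  obtain ⟨NA, hNA, hcA⟩ := hnet (QubitIdx nA)
  obtain ⟨NB, hNB, hcB⟩ := hnet (QubitIdx nB)
  set P := liftC (QubitIdx nC) (eprProjOne nA nB hA hB) with hPdef
  have hP : P.IsHermitian := liftC_herm (eprProj_herm nA nB hA hB)
  have hPP : P * P = P := liftC_idem (eprProj_idem nA nB hA hB)
  have htr : 4 * P.trace = (Fintype.card (QubitIdx nA × QubitIdx nB × QubitIdx nC) : ℂ) := by
    rw [hPdef, liftC_trace, ← mul_assoc, eprProj_trace]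
    simp [mul_assoc]
  have hcard : (Fintype.card (QubitIdx nA × QubitIdx nB × QubitIdx nC) : ℝ)
      = 2 ^ (nA + nB + nC) := by
    simp [pow_add, mul_assoc]
  have hT := htail _ μ P hP hPP htr
  set T : Set (Matrix.unitaryGroup (QubitIdx nA × QubitIdx nB × QubitIdx nC) ℂ) :=
    {U | (h / 2 + 1 / 4) ^ 2 ≤ (star (haarState U) ⬝ᵥ P *ᵥ haarState U).re} with hTdef
  have hsub : {U | ∃ UA : Matrix.unitaryGroup (QubitIdx nA) ℂ,
               ∃ UB : Matrix.unitaryGroup (QubitIdx nB) ℂ,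
               h ^ 2 ≤ (Matrix.trace ((UA.1 ⊗ₖ UB.1) * rhoAB (haarState U) *
                          (UA.1 ⊗ₖ UB.1)ᴴ * eprProjOne nA nB hA hB)).re}
      ⊆ ⋃ z ∈ NA ×ˢ NB, (fun U => kronU z.1 z.2 (QubitIdx nC) * U) ⁻¹' T := by
    rintro U ⟨UA, UB, hU⟩
    obtain ⟨VA, hVA, hdA⟩ := hcA UA
    obtain ⟨VB, hVB, hdB⟩ := hcB UB
    refine Set.mem_biUnion (x := (VA, VB)) (Finset.mem_product.2 ⟨hVA, hVB⟩) ?_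
    rw [trace_eq, ← hPdef, proj_norm hP hPP] at hU
    change (h / 2 + 1 / 4) ^ 2 ≤ (star (haarState (kronU VA VB (QubitIdx nC) * U)) ⬝ᵥ
      P *ᵥ haarState (kronU VA VB (QubitIdx nC) * U)).re
    rw [haarState_mul, proj_norm hP hPP]
    have h1 := proj_lip hP hPP (kronU UA UB (QubitIdx nC)).1 (kronU VA VB (QubitIdx nC)).1
      (haarState U) (haarState_sum U)
    have h2 := kronU_lip (C := QubitIdx nC) UA VA UB VB
    have h3 := abs_le_of_sq_le_sq' hU (norm_nonneg _)
    have h4 : h / 2 + 1 / 4 ≤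
        ‖WithLp.toLp 2 (P *ᵥ ((kronU VA VB (QubitIdx nC)).1 *ᵥ haarState U))‖ := by
      linarith [h3.2]
    exact pow_le_pow_left₀ (by linarith) h4 2
  refine (measure_mono hsub).trans ((measure_biUnion_finset_le _ _).trans ?_)
  simp_rw [measure_preimage_mul]
  rw [Finset.sum_const, Finset.card_product, nsmul_eq_mul]
  have hfin : ((NA.card * NB.card : ℕ) : ℝ) * Real.exp (-(α * 2 ^ (nA + nB + nC)))
      ≤ Real.exp (-(α * 2 ^ (nA + nB + nC)) + C * (((2 : ℝ) ^ nA) ^ 2 + ((2 : ℝ) ^ nB) ^ 2)) := by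
    have e : -(α * 2 ^ (nA + nB + nC)) + C * (((2 : ℝ) ^ nA) ^ 2 + ((2 : ℝ) ^ nB) ^ 2)
        = (C * ((2 : ℝ) ^ nA) ^ 2 + C * ((2 : ℝ) ^ nB) ^ 2) + -(α * 2 ^ (nA + nB + nC)) := by ring
    rw [e, Real.exp_add, Real.exp_add]
    have hNA' : (NA.card : ℝ) ≤ Real.exp (C * ((2 : ℝ) ^ nA) ^ 2) := by simpa using hNA
    have hNB' : (NB.card : ℝ) ≤ Real.exp (C * ((2 : ℝ) ^ nB) ^ 2) := by simpa using hNB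
    push_cast
    gcongr
  rw [hcard] at hT
  calc ((NA.card * NB.card : ℕ) : ENNReal) * μ T
      ≤ ((NA.card * NB.card : ℕ) : ENNReal) *
        ENNReal.ofReal (Real.exp (-(α * 2 ^ (nA + nB + nC)))) := by gcongr
    _ = ENNReal.ofReal (((NA.card * NB.card : ℕ) : ℝ) *
        Real.exp (-(α * 2 ^ (nA + nB + nC)))) := by
        rw [ENNReal.ofReal_mul (Nat.cast_nonneg _), ENNReal.ofReal_natCast]
    _ ≤ _ := ENNReal.ofReal_le_ofReal hfin
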